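/- Let R be an integral domain of characteristic zero that is finitely generated as a Z-module, and let A be a commutative R-algebra that is finitely generated as an R-module. Let R-hat be the completion of R at a maximal ideal. Then every prime ideal of A ⊗_R R-hat has height at most 1; in particular the Krull dimension of A ⊗_R R-hat is at most 1. -/

import Mathlib

open TensorProduct

/-!
The completion `R̂` of a Noetherian ring `R` at a maximal ideal `P` is local with maximal ideal
`P R̂`, and it is Noetherian, being a quotient of a power series ring over `R`. If `P` is minimal
over an ideal generated by `ht P` elements, then so is `P R̂`, so Krull's height theorem gives
`dim R̂ ≤ ht P`. Integral extensions do not raise the dimension, by incomparability; this bounds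
the dimension of `A ⊗[R] R̂` by `ht P`, and `ht P` by `dim ℤ = 1` when `R` is finite over `ℤ`.
-/

section IntegralExtension

variable (R : Type*) {S : Type*} [CommRing R] [CommRing S] [Algebra R S] [Algebra.IsIntegral R S]

variable (S) in
theorem ringKrullDim_le_of_isIntegral : ringKrullDim S ≤ ringKrullDim R :=
  Order.krullDim_le_of_strictMono (PrimeSpectrum.comap (algebraMap R S))
    fun _ _ hlt ↦ Ideal.IsIntegral.comap_lt_comap hlt

theorem height_le_of_isIntegral {n : ℕ} [Ring.KrullDimLE n R] (p : Ideal S) [p.IsPrime] :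
    p.height ≤ n := by
  have hdim : ringKrullDim S ≤ n :=
    (ringKrullDim_le_of_isIntegral R S).trans Order.KrullDimLE.krullDim_le
  exact_mod_cast Ideal.height_le_ringKrullDim_of_isPrime.trans hdim

end IntegralExtension

section CompleteAlgebra

variable (R : Type*) {S : Type*} [CommRing R] [CommRing S] [Algebra R S]
  (K : Ideal S) [IsAdicComplete K S]

theorem exists_mvPowerSeries_algHom_of_isAdicComplete {σ : Type*} [Finite σ] (a : σ → S)
    (ha : ∀ i, a i ∈ K) :
    ∃ F : MvPowerSeries σ R →ₐ[R] S, ∀ i, F (MvPowerSeries.X i) = a i := by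
  let : WithIdeal S := ⟨K⟩
  let : UniformSpace R := ⊥
  obtain ⟨_, _⟩ := (IsAdic.isAdicComplete_iff (I := K) rfl).mp ‹_›
  have : ContinuousSMul R S := continuousSMul_of_algebraMap R S continuous_of_discreteTopology
  have heval : MvPowerSeries.HasEval a :=
    { hpow := fun i ↦ WithIdeal.isTopologicallyNilpotent_of_mem (ha i)
      tendsto_zero := by simp only [Filter.cofinite_eq_bot, Filter.tendsto_bot] }
  exact ⟨MvPowerSeries.aeval heval, fun i ↦ by simp [MvPowerSeries.coe_aeval]⟩

theorem isNoetherianRing_of_isAdicComplete [IsNoetherianRing R] (hK : K.FG)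
    (hsurj : Function.Surjective (algebraMap R (S ⧸ K))) : IsNoetherianRing S := by
  obtain ⟨n, a, rfl⟩ := Submodule.fg_iff_exists_fin_generating_family.mp hK
  obtain ⟨F, hF⟩ := exists_mvPowerSeries_algHom_of_isAdicComplete R (Ideal.span (Set.range a)) a
    fun i ↦ Ideal.subset_span ⟨i, rfl⟩
  let J : Ideal (MvPowerSeries (Fin n) R) := Ideal.span (Set.range MvPowerSeries.X)
  have hJ : J.map F.toRingHom = Ideal.span (Set.range a) := by
    simp [J, Ideal.map_span, ← Set.range_comp, Function.comp_def, hF]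
  have : IsHausdorff (J.map F.toRingHom) S := hJ ▸ inferInstance
  suffices hquot : Function.Surjective
      ((Ideal.Quotient.mk (J.map F.toRingHom)).comp F.toRingHom) from
    isNoetherianRing_of_surjective _ S F.toRingHom
      (surjective_of_mk_map_comp_surjective F.toRingHom hquot)
  rw [hJ]
  intro y
  obtain ⟨r, rfl⟩ := hsurj y
  exact ⟨algebraMap R _ r, congrArg (Ideal.Quotient.mk _) (F.commutes r)⟩

end CompleteAlgebra

theorem height_map_le_height {R S : Type*} [CommRing R] [IsNoetherianRing R] [CommRing S]
    [IsNoetherianRing S] [Algebra R S] (p : Ideal R) [p.IsPrime]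
    [(p.map (algebraMap R S)).IsPrime] [(p.map (algebraMap R S)).LiesOver p] :
    (p.map (algebraMap R S)).height ≤ p.height := by
  simpa only [Ideal.map_quotient_self, Ideal.height_bot, add_zero] using
    Ideal.height_le_height_add_of_liesOver p (p.map (algebraMap R S))

section AdicCompletion

variable {R : Type*} [CommRing R]

theorem surjective_algebraMap_adicCompletion_quotient {I : Ideal R} (hI : I.FG) :
    Function.Surjective (algebraMap R
      (AdicCompletion I R ⧸ I.map (algebraMap R (AdicCompletion I R)))) := by
  intro y
  obtain ⟨x, rfl⟩ := Ideal.Quotient.mk_surjective y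
  obtain ⟨r, hr⟩ := Ideal.Quotient.mk_surjective (AdicCompletion.evalOneₐ I x)
  have hker : algebraMap R (AdicCompletion I R) r - x ∈
      RingHom.ker (AdicCompletion.evalOneₐ I).toRingHom := by
    rw [RingHom.mem_ker, map_sub, sub_eq_zero]
    exact hr
  rw [AdicCompletion.ker_evalOneₐ_eq_map I hI] at hker
  exact ⟨r, Ideal.Quotient.eq.mpr hker⟩

variable [IsNoetherianRing R]

theorem isNoetherianRing_adicCompletion (I : Ideal R) : IsNoetherianRing (AdicCompletion I R) :=
  have hI : I.FG := IsNoetherian.noetherian I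
  have := AdicCompletion.isAdicComplete_self I hI
  isNoetherianRing_of_isAdicComplete R _ (hI.map _)
    (surjective_algebraMap_adicCompletion_quotient hI)

theorem ringKrullDim_adicCompletion_le_height (P : Ideal R) [hP : P.IsMaximal] :
    ringKrullDim (AdicCompletion P R) ≤ P.height := by
  let m := P.map (algebraMap R (AdicCompletion P R))
  have hfg : P.FG := IsNoetherian.noetherian P
  have := isNoetherianRing_adicCompletion P
  have : IsAdicComplete m (AdicCompletion P R) := AdicCompletion.isAdicComplete_self P hfg
  have hm : m.IsMaximal := AdicCompletion.isMaximal_map_of_le P P le_rfl hfg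
  have := isLocalRing_of_isAdicComplete_maximal m
  have : m.LiesOver P := ⟨hP.eq_of_le (Ideal.comap_isPrime _ m).ne_top Ideal.le_comap_map⟩
  rw [← IsLocalRing.maximalIdeal_height_eq_ringKrullDim, ← IsLocalRing.eq_maximalIdeal hm]
  exact_mod_cast height_map_le_height P

theorem stmt_3_general (A : Type*) [CommRing A] [Algebra R A] [Algebra.IsIntegral R A]
    (P : Ideal R) [P.IsMaximal] :
    (∀ p : PrimeSpectrum (A ⊗[R] AdicCompletion P R), Order.height p ≤ P.height) ∧
      ringKrullDim (A ⊗[R] AdicCompletion P R) ≤ P.height := by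
  have hdim : ringKrullDim (A ⊗[R] AdicCompletion P R) ≤ P.height :=
    calc ringKrullDim (A ⊗[R] AdicCompletion P R)
      _ = ringKrullDim (AdicCompletion P R ⊗[R] A) :=
        ringKrullDim_eq_of_ringEquiv (Algebra.TensorProduct.comm R A _).toRingEquiv
      _ ≤ ringKrullDim (AdicCompletion P R) := ringKrullDim_le_of_isIntegral _ _
      _ ≤ P.height := ringKrullDim_adicCompletion_le_height P
  exact ⟨fun p ↦ by exact_mod_cast (Order.height_le_krullDim p).trans hdim, hdim⟩

end AdicCompletion

/-- Let `R` be an integral domain of characteristic zero, finitely generated as a `ℤ`-module,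
and `A` a commutative `R`-algebra which is module-finite over `R`. For a maximal ideal `P` of
`R`, every prime of `A ⊗_R R̂` (with `R̂` the `P`-adic completion of `R`) has height at most
`1`; in particular the Krull dimension of `A ⊗_R R̂` is at most `1`. -/
theorem stmt_3 (R A : Type*) [CommRing R] [IsDomain R] [CharZero R] [Module.Finite ℤ R]
    [CommRing A] [Algebra R A] [Module.Finite R A]
    (P : Ideal R) (hP : P.IsMaximal) :
    (∀ p : PrimeSpectrum (A ⊗[R] AdicCompletion P R), Order.height p ≤ 1) ∧
      ringKrullDim (A ⊗[R] AdicCompletion P R) ≤ 1 := by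
  have := IsNoetherianRing.of_finite ℤ R
  have hht : P.height ≤ 1 := mod_cast height_le_of_isIntegral ℤ (n := 1) P
  exact ⟨fun p ↦ ((stmt_3_general A P).1 p).trans hht,
    (stmt_3_general A P).2.trans (by exact_mod_cast hht)⟩
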